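/- arXiv:1303.1421 — 3 statements merged into one kernel-verified Lean document; each statement's English description precedes it below -/
import Mathlib

section
/- Let Ω ⊆ ℝⁿ be open, let f : Ω → ℝ be continuous, let A be a continuous field of symmetric n×n real matrices on Ω, and let p ∈ Ω. If f satisfies Hess f ≤ A at p in the barrier sense, then f satisfies Hess f ≤ A at p in the viscosity sense. -/
open Finset

/-- Second partial derivative `∂_j ∂_i h` at `p`: the `(i,j)` entry of the Hessian matrix. -/
noncomputable def hess2 {n : ℕ} (h : (Fin n → ℝ) → ℝ) (p : Fin n → ℝ) (i j : Fin n) : ℝ :=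
  fderiv ℝ (fun x => fderiv ℝ h x (Pi.single i 1)) p (Pi.single j 1)

/-!
An upper barrier `k` and a lower test function `h` both agree with `f` at `p`, and `h ≤ f ≤ k` near
`p`. So `k - h` has a local minimum at `p`, and its second derivative along every line through `p`
is nonnegative there: `D²h p ≤ D²k p ≤ A p + ε`. Let `ε → 0`.
-/

open Filter Topology

theorem deriv_deriv_nonneg_of_isLocalMin {φ : ℝ → ℝ} {a : ℝ} (hmin : IsLocalMin φ a)
    (hcont : ContinuousAt φ a) : 0 ≤ deriv (deriv φ) a := by
  by_contra! hneg
  have hmax : IsLocalMax φ a := isLocalMax_of_deriv_deriv_neg hneg hmin.deriv_eq_zero hcont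
  have hconst : φ =ᶠ[𝓝 a] fun _ => φ a := by
    filter_upwards [hmin, hmax] with t hle hge using le_antisymm hge hle
  have hzero : deriv (deriv φ) a = 0 := by
    simpa using hconst.deriv.deriv_eq
  exact hneg.ne hzero

section SecondDerivative

variable {𝕜 E F : Type*} [NontriviallyNormedField 𝕜] [NormedAddCommGroup E] [NormedSpace 𝕜 E]
  [NormedAddCommGroup F] [NormedSpace 𝕜 F] {g h : E → F} {p : E}

theorem eventually_differentiableAt_of_contDiffAt_two (hg : ContDiffAt 𝕜 2 g p) :
    ∀ᶠ x in 𝓝 p, DifferentiableAt 𝕜 g x :=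
  (hg.eventually (by simp)).mono fun _ hx => hx.differentiableAt two_ne_zero

theorem differentiableAt_fderiv_of_contDiffAt_two (hg : ContDiffAt 𝕜 2 g p) :
    DifferentiableAt 𝕜 (fderiv 𝕜 g) p :=
  (hg.fderiv_right (m := 1) one_add_one_eq_two.le).differentiableAt one_ne_zero

theorem fderiv_fderiv_sub (hg : ContDiffAt 𝕜 2 g p) (hh : ContDiffAt 𝕜 2 h p) :
    fderiv 𝕜 (fderiv 𝕜 (g - h)) p = fderiv 𝕜 (fderiv 𝕜 g) p - fderiv 𝕜 (fderiv 𝕜 h) p := by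
  have hsub : fderiv 𝕜 (g - h) =ᶠ[𝓝 p] fderiv 𝕜 g - fderiv 𝕜 h := by
    filter_upwards [eventually_differentiableAt_of_contDiffAt_two hg,
      eventually_differentiableAt_of_contDiffAt_two hh] with x hgx hhx using fderiv_sub hgx hhx
  rw [hsub.fderiv_eq, fderiv_sub (differentiableAt_fderiv_of_contDiffAt_two hg)
    (differentiableAt_fderiv_of_contDiffAt_two hh)]

theorem deriv_deriv_comp_add_smul (hg : ContDiffAt 𝕜 2 g p) (v : E) :
    deriv (deriv fun t : 𝕜 => g (p + t • v)) 0 = fderiv 𝕜 (fderiv 𝕜 g) p v v := by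
  have hline (t : 𝕜) : HasDerivAt (fun t : 𝕜 => p + t • v) v t := by
    simpa using ((hasDerivAt_id t).smul_const v).const_add p
  have htendsto : Tendsto (fun t : 𝕜 => p + t • v) (𝓝 0) (𝓝 p) := by
    simpa using (hline 0).continuousAt.tendsto
  have hfirst : deriv (fun t : 𝕜 => g (p + t • v)) =ᶠ[𝓝 0] fun t => fderiv 𝕜 g (p + t • v) v := by
    filter_upwards [htendsto.eventually (eventually_differentiableAt_of_contDiffAt_two hg)]
      with t ht using (ht.hasFDerivAt.comp_hasDerivAt t (hline t)).deriv
  have hsecond : HasFDerivAt (fun x => fderiv 𝕜 g x v) ((fderiv 𝕜 (fderiv 𝕜 g) p).flip v) p := by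
    simpa using (differentiableAt_fderiv_of_contDiffAt_two hg).hasFDerivAt.clm_apply
      (hasFDerivAt_const v p)
  rw [hfirst.deriv_eq]
  exact (hsecond.hasLineDerivAt v).lineDeriv

end SecondDerivative

section NormedSpace

variable {E : Type*} [NormedAddCommGroup E] [NormedSpace ℝ E]
  {f h k : E → ℝ} {p : E} {B : LinearMap.BilinForm ℝ E}

theorem fderiv_fderiv_apply_self_nonneg_of_isLocalMin (hh : ContDiffAt ℝ 2 h p)
    (hmin : IsLocalMin h p) (v : E) : 0 ≤ fderiv ℝ (fderiv ℝ h) p v v := by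
  have hline : ContinuousAt (fun t : ℝ => p + t • v) 0 := by fun_prop
  rw [← deriv_deriv_comp_add_smul hh v]
  apply deriv_deriv_nonneg_of_isLocalMin
  · have hmin' : IsLocalMin h (p + (0 : ℝ) • v) := by simpa using hmin
    exact IsMinFilter.comp_tendsto hmin' hline
  · exact ContinuousAt.comp (by simpa using hh.continuousAt) hline

theorem fderiv_fderiv_apply_self_le_of_eventuallyLE (hh : ContDiffAt ℝ 2 h p)
    (hk : ContDiffAt ℝ 2 k p) (heq : h p = k p) (hle : h ≤ᶠ[𝓝 p] k) (v : E) :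
    fderiv ℝ (fderiv ℝ h) p v v ≤ fderiv ℝ (fderiv ℝ k) p v v := by
  have hmin : IsLocalMin (k - h) p := by
    filter_upwards [hle] with x hx
    simpa [heq] using hx
  have hnonneg : 0 ≤ fderiv ℝ (fderiv ℝ (k - h)) p v v :=
    fderiv_fderiv_apply_self_nonneg_of_isLocalMin (hk.sub hh) hmin v
  simpa [fderiv_fderiv_sub hk hh] using hnonneg

/-- `Hess f ≤ B` at `p` in the viscosity sense, on a normed space: every `C²` function touching `f`
from below at `p` has second derivative at most `B`. The two sides are compared as quadratic forms,
so only the symmetric part of `B` matters. -/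
def HessLEViscosity (f : E → ℝ) (p : E) (B : LinearMap.BilinForm ℝ E) : Prop :=
  ∀ h : E → ℝ, ContDiffAt ℝ 2 h p → h p = f p → h ≤ᶠ[𝓝 p] f →
    ∀ v, fderiv ℝ (fderiv ℝ h) p v v ≤ B v v

/-- `Hess f ≤ B` at `p` in the barrier sense, on a normed space: for every `ε > 0` some `C²`
function touching `f` from above at `p` has second derivative at most `B + ε`. The error is measured
by `ε * ‖v‖ ^ 2`, which stands for the quadratic form of `ε • Id`. -/
def HessLEBarrier (f : E → ℝ) (p : E) (B : LinearMap.BilinForm ℝ E) : Prop :=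
  ∀ ε > 0, ∃ k : E → ℝ, ContDiffAt ℝ 2 k p ∧ k p = f p ∧ f ≤ᶠ[𝓝 p] k ∧
    ∀ v, fderiv ℝ (fderiv ℝ k) p v v ≤ B v v + ε * ‖v‖ ^ 2

theorem barrier_implies_viscosity_hessian_general (hbarrier : HessLEBarrier f p B) :
    HessLEViscosity f p B := by
  intro h hh hhp hhf v
  have hbound : ∀ ε > 0, fderiv ℝ (fderiv ℝ h) p v v ≤ B v v + ε * ‖v‖ ^ 2 := by
    intro ε hε
    obtain ⟨k, hk, hkp, hfk, hkB⟩ := hbarrier ε hε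
    calc fderiv ℝ (fderiv ℝ h) p v v
      _ ≤ fderiv ℝ (fderiv ℝ k) p v v :=
        fderiv_fderiv_apply_self_le_of_eventuallyLE hh hk (hhp.trans hkp.symm) (hhf.trans hfk) v
      _ ≤ B v v + ε * ‖v‖ ^ 2 := hkB v
  have hlim : Tendsto (fun ε : ℝ => B v v + ε * ‖v‖ ^ 2) (𝓝[>] 0) (𝓝 (B v v)) :=
    tendsto_nhdsWithin_of_tendsto_nhds (Continuous.tendsto' (by fun_prop) _ _ (by simp))
  exact ge_of_tendsto hlim (eventually_mem_nhdsWithin.mono hbound)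

end NormedSpace

theorem toBilin'_diagonal_const_apply_self_le {ι : Type*} [Fintype ι] [DecidableEq ι] {ε : ℝ}
    (hε : 0 ≤ ε) (v : ι → ℝ) :
    (Matrix.diagonal fun _ => ε).toBilin' v v ≤ Fintype.card ι * ε * ‖v‖ ^ 2 := by
  have hcoord (i : ι) : v i * ε * v i ≤ ε * ‖v‖ ^ 2 := by
    have hsq : v i ^ 2 ≤ ‖v‖ ^ 2 := sq_le_sq.2 (by simpa using norm_le_pi_norm v i)
    linarith [mul_le_mul_of_nonneg_left hsq hε]
  calc (Matrix.diagonal fun _ => ε).toBilin' v v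
    _ = ∑ i, v i * ε * v i := by simp [Matrix.toBilin'_apply, Matrix.diagonal_apply]
    _ ≤ ∑ _i : ι, ε * ‖v‖ ^ 2 := sum_le_sum fun i _ => hcoord i
    _ = Fintype.card ι * ε * ‖v‖ ^ 2 := by simp [mul_assoc]

section Coordinates

variable {n : ℕ} {f h : (Fin n → ℝ) → ℝ} {p : Fin n → ℝ} {M : Matrix (Fin n) (Fin n) ℝ}

theorem hess2_eq_fderiv_fderiv (hh : DifferentiableAt ℝ (fderiv ℝ h) p) (i j : Fin n) :
    hess2 h p i j = fderiv ℝ (fderiv ℝ h) p (Pi.single j 1) (Pi.single i 1) := by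
  simp [hess2, fderiv_clm_apply hh (differentiableAt_const _)]

theorem sum_hess2_mul_mul (hh : DifferentiableAt ℝ (fderiv ℝ h) p) (v : Fin n → ℝ) :
    ∑ i, ∑ j, hess2 h p i j * v i * v j = fderiv ℝ (fderiv ℝ h) p v v := by
  conv_rhs => rw [pi_eq_sum_univ' v]
  simp only [map_sum, map_smul, _root_.sum_apply, smul_apply, smul_eq_mul, mul_sum,
    hess2_eq_fderiv_fderiv hh]
  exact sum_congr rfl fun i _ => sum_congr rfl fun j _ => by ring

theorem sum_sub_hess2_nonneg_iff (hh : DifferentiableAt ℝ (fderiv ℝ h) p) (v : Fin n → ℝ) :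
    0 ≤ ∑ i, ∑ j, (M i j - hess2 h p i j) * v i * v j ↔
      fderiv ℝ (fderiv ℝ h) p v v ≤ M.toBilin' v v := by
  rw [← sum_hess2_mul_mul hh, Matrix.toBilin'_apply]
  simp only [sub_mul, sum_sub_distrib, sub_nonneg, mul_comm (M _ _)]

theorem hessLEBarrier_toBilin'
    (hbarrier : ∀ ε : ℝ, 0 < ε → ∃ k : (Fin n → ℝ) → ℝ, ContDiffAt ℝ 2 k p ∧ k p = f p ∧
      f ≤ᶠ[𝓝 p] k ∧ ∀ v : Fin n → ℝ,
        0 ≤ ∑ i, ∑ j, (M i j + (if i = j then ε else 0) - hess2 k p i j) * v i * v j) :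
    HessLEBarrier f p M.toBilin' := by
  intro ε hε
  -- The sup norm only gives `∑ i, v i ^ 2 ≤ n * ‖v‖ ^ 2`, hence the rescaling of `ε`.
  obtain ⟨k, hk, hkp, hfk, hkM⟩ := hbarrier (ε / (n + 1)) (by positivity)
  refine ⟨k, hk, hkp, hfk, fun v => ?_⟩
  have hscale : n * (ε / (n + 1)) ≤ ε := by
    rw [mul_div_left_comm]
    exact mul_le_of_le_one_right hε.le (div_le_one_of_le₀ (by linarith) (by positivity))
  calc fderiv ℝ (fderiv ℝ k) p v v
    _ ≤ (M + Matrix.diagonal fun _ => ε / (n + 1)).toBilin' v v :=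
      (sum_sub_hess2_nonneg_iff (differentiableAt_fderiv_of_contDiffAt_two hk) v).1 (hkM v)
    _ = M.toBilin' v v + (Matrix.diagonal fun _ => ε / (n + 1)).toBilin' v v := by
      simp only [map_add, LinearMap.add_apply]
    _ ≤ M.toBilin' v v + n * (ε / (n + 1)) * ‖v‖ ^ 2 := by
      gcongr
      simpa using toBilin'_diagonal_const_apply_self_le (ε := ε / (n + 1)) (by positivity) v
    _ ≤ M.toBilin' v v + ε * ‖v‖ ^ 2 := by gcongr

theorem HessLEViscosity.sum_sub_hess2_nonneg (hvisc : HessLEViscosity f p M.toBilin')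
    (hh : ContDiffAt ℝ 2 h p) (hhp : h p = f p) (hhf : h ≤ᶠ[𝓝 p] f) (v : Fin n → ℝ) :
    0 ≤ ∑ i, ∑ j, (M i j - hess2 h p i j) * v i * v j :=
  (sum_sub_hess2_nonneg_iff (differentiableAt_fderiv_of_contDiffAt_two hh) v).2
    (hvisc h hh hhp hhf v)

end Coordinates

/-- Barrier sense implies viscosity sense for the inequality `Hess f ≤ A` at a point `p`. -/
theorem barrier_implies_viscosity_hessian {n : ℕ}
    (Ω : Set (Fin n → ℝ)) (hΩ : IsOpen Ω)
    (f : (Fin n → ℝ) → ℝ) (hf : ContinuousOn f Ω)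
    (A : (Fin n → ℝ) → Matrix (Fin n) (Fin n) ℝ)
    (hAcont : ∀ i j, ContinuousOn (fun x => A x i j) Ω)
    (hAsymm : ∀ x ∈ Ω, ∀ i j, A x i j = A x j i)
    (p : Fin n → ℝ) (hp : p ∈ Ω)
    (hbarrier : ∀ ε : ℝ, 0 < ε → ∃ (U : Set (Fin n → ℝ)) (h : (Fin n → ℝ) → ℝ),
      IsOpen U ∧ p ∈ U ∧ U ⊆ Ω ∧ ContDiffOn ℝ 2 h U ∧ h p = f p ∧
      (∀ x ∈ U, f x ≤ h x) ∧
      ∀ v : Fin n → ℝ,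
        0 ≤ ∑ i, ∑ j, (A p i j + (if i = j then ε else 0) - hess2 h p i j) * v i * v j) :
    ∀ (U : Set (Fin n → ℝ)) (h : (Fin n → ℝ) → ℝ),
      IsOpen U → p ∈ U → U ⊆ Ω → ContDiffOn ℝ 2 h U → h p = f p →
      (∀ x ∈ U, h x ≤ f x) →
      ∀ v : Fin n → ℝ,
        0 ≤ ∑ i, ∑ j, (A p i j - hess2 h p i j) * v i * v j := by
  intro U h hU hpU _ hh hhp hhf
  have hbarrier' : HessLEBarrier f p (A p).toBilin' := hessLEBarrier_toBilin' fun ε hε => by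
    obtain ⟨W, k, hW, hpW, -, hk, hkp, hfk, hkA⟩ := hbarrier ε hε
    exact ⟨k, hk.contDiffAt (hW.mem_nhds hpW), hkp, eventually_of_mem (hW.mem_nhds hpW) hfk, hkA⟩
  exact (barrier_implies_viscosity_hessian_general hbarrier').sum_sub_hess2_nonneg
    (hh.contDiffAt (hU.mem_nhds hpU)) hhp (eventually_of_mem (hU.mem_nhds hpU) hhf)
end

section
/- Let f : ℝ → ℝ be defined by f(x) = x²·sin(1/x) for x ≠ 0 and f(0) = 0. Then f satisfies f''(0) ≤ 0 in the viscosity sense: every C² function h defined on a neighborhood U of 0 with h(0) = 0 and h ≤ f on U satisfies h''(0) ≤ 0. -/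
/-!
A test function `h` touching `f` from below at `0` inherits `f' 0 = 0`. If `h'' 0` were positive,
the second derivative test would make `0` a local minimum of `h`, so `0 ≤ h ≤ f` near `0`; but `f`
is negative at the points `x → 0⁺` where `sin (1 / x) = -1`.
-/

open Asymptotics Filter
open scoped Topology

section Touching

variable {f g : ℝ → ℝ} {f' g' a : ℝ}

theorem hasDerivAt_eq_of_eventuallyLE (hf : HasDerivAt f f' a) (hg : HasDerivAt g g' a)
    (hle : f ≤ᶠ[𝓝 a] g) (heq : f a = g a) : f' = g' := by
  have hmax : IsLocalMax (f - g) a := by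
    filter_upwards [hle] with x hx
    simpa [heq] using hx
  exact sub_eq_zero.mp (hmax.hasDerivAt_eq_zero (hf.sub hg))

theorem deriv_deriv_nonpos_of_frequently_lt (hderiv : deriv f a = 0) (hcont : ContinuousAt f a)
    (hlt : ∃ᶠ x in 𝓝 a, f x < f a) : deriv (deriv f) a ≤ 0 := by
  by_contra! hpos
  have hmin : IsLocalMin f a := isLocalMin_of_deriv_deriv_pos hpos hderiv hcont
  exact hlt (hmin.mono fun _ => not_lt.mpr)

theorem second_deriv_nonpos_of_eventuallyLE_of_frequently_lt {h : ℝ → ℝ} {h'' : ℝ}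
    (hf : HasDerivAt f 0 a) (hlt : ∃ᶠ x in 𝓝 a, f x < f a)
    (hh : DifferentiableAt ℝ h a) (hh'' : HasDerivAt (deriv h) h'' a)
    (hle : h ≤ᶠ[𝓝 a] f) (heq : h a = f a) : h'' ≤ 0 := by
  have hderiv : deriv h a = 0 := hasDerivAt_eq_of_eventuallyLE hh.hasDerivAt hf hle heq
  have hlt' : ∃ᶠ x in 𝓝 a, h x < h a :=
    (hlt.and_eventually hle).mono fun _ hx => heq ▸ hx.2.trans_lt hx.1
  exact hh''.deriv ▸ deriv_deriv_nonpos_of_frequently_lt hderiv hh.continuousAt hlt'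

end Touching

theorem hasDerivAt_sq_mul_of_isBigO_one {𝕜 : Type*} [NontriviallyNormedField 𝕜] {g : 𝕜 → 𝕜}
    (hg : g =O[𝓝 0] fun _ => (1 : ℝ)) : HasDerivAt (fun x => x ^ 2 * g x) 0 0 := by
  have hquadratic : (fun x => x ^ 2 * g x) =O[𝓝 0] fun x => ‖x - 0‖ ^ 2 := by
    simpa using ((isBigO_refl (fun x : 𝕜 => x) (𝓝 0)).norm_right.pow 2).mul hg
  simpa using (hquadratic.hasFDerivAt (𝕜 := 𝕜) one_lt_two).hasDerivAt

theorem frequently_atTop_eq_of_periodic {G α : Type*} [AddCommGroup G] [LinearOrder G]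
    [IsOrderedAddMonoid G] [Archimedean G] {g : G → α} {c : G} (hg : Function.Periodic g c)
    (hc : 0 < c) (x : G) : ∃ᶠ y in atTop, g y = g x := by
  have htranslates : Tendsto (fun n : ℕ => x + n • c) atTop atTop :=
    tendsto_atTop_add_const_left _ x (tendsto_id.atTop_nsmul_const hc)
  exact htranslates.frequently (Frequently.of_forall fun n => hg.nsmul n x)

theorem frequently_sin_one_div_eq_neg_one : ∃ᶠ x : ℝ in 𝓝[>] 0, Real.sin (1 / x) = -1 := by
  have hsin : ∃ᶠ y in atTop, Real.sin y = -1 := by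
    simpa using frequently_atTop_eq_of_periodic Real.sin_periodic Real.two_pi_pos (-(Real.pi / 2))
  refine tendsto_inv_atTop_nhdsGT_zero.frequently (hsin.mono fun y hy => ?_)
  rwa [one_div, inv_inv]

theorem frequently_sq_mul_sin_one_div_neg : ∃ᶠ x : ℝ in 𝓝[>] 0, x ^ 2 * Real.sin (1 / x) < 0 := by
  have hpos : ∀ᶠ x : ℝ in 𝓝[>] 0, 0 < x := self_mem_nhdsWithin
  refine (frequently_sin_one_div_eq_neg_one.and_eventually hpos).mono ?_
  rintro x ⟨hsin, hx⟩
  rw [hsin]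
  linarith [pow_pos hx 2]

theorem hasDerivAt_sq_mul_sin_one_div_zero :
    HasDerivAt (fun x : ℝ => x ^ 2 * Real.sin (1 / x)) 0 0 :=
  hasDerivAt_sq_mul_of_isBigO_one <|
    isBigO_of_le _ fun x => by simpa using Real.abs_sin_le_one (1 / x)

theorem viscosity_second_deriv_nonpos_of_x_sq_sin_inv_general {f h : ℝ → ℝ} {h'' : ℝ}
    (hf : ∀ x : ℝ, f x = if x = 0 then 0 else x ^ 2 * Real.sin (1 / x))
    (hh : DifferentiableAt ℝ h 0) (hh'' : HasDerivAt (deriv h) h'' 0)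
    (h00 : h 0 = 0) (hle : h ≤ᶠ[𝓝 0] f) : h'' ≤ 0 := by
  obtain rfl : f = fun x => x ^ 2 * Real.sin (1 / x) := by
    ext x
    rw [hf]
    split_ifs with hx <;> simp [hx]
  refine second_deriv_nonpos_of_eventuallyLE_of_frequently_lt hasDerivAt_sq_mul_sin_one_div_zero
    ?_ hh hh'' hle (by simpa using h00)
  simpa using frequently_sq_mul_sin_one_div_neg.filter_mono nhdsWithin_le_nhds

/-- The function `f(x) = x² sin(1/x)` (with `f(0) = 0`) satisfies `f''(0) ≤ 0` in the
viscosity sense: every `C²` function `h` on a neighborhood `U` of `0` with `h 0 = 0` and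
`h ≤ f` on `U` satisfies `h''(0) ≤ 0`. -/
theorem viscosity_second_deriv_nonpos_of_x_sq_sin_inv
    (f : ℝ → ℝ)
    (hf : ∀ x : ℝ, f x = if x = 0 then 0 else x ^ 2 * Real.sin (1 / x))
    (U : Set ℝ) (h : ℝ → ℝ)
    (hU : IsOpen U) (h0U : (0 : ℝ) ∈ U)
    (hC2 : ContDiffOn ℝ 2 h U)
    (h00 : h 0 = 0)
    (hle : ∀ x ∈ U, h x ≤ f x) :
    deriv (deriv h) 0 ≤ 0 := by
  have hUnhds : U ∈ 𝓝 0 := hU.mem_nhds h0U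
  have hderivC1 : ContDiffOn ℝ 1 (deriv h) U := hC2.deriv_of_isOpen hU one_add_one_eq_two.le
  exact viscosity_second_deriv_nonpos_of_x_sq_sin_inv_general hf
    ((hC2.contDiffAt hUnhds).differentiableAt two_ne_zero)
    ((hderivC1.contDiffAt hUnhds).differentiableAt one_ne_zero).hasDerivAt
    h00 (eventually_of_mem hUnhds hle)
end

section
/- Let Ω ⊆ ℝⁿ be open, let f : Ω → ℝ be continuous, and let α : Ω → ℝ be smooth. If f satisfies Δf ≤ α at every point of Ω in the viscosity sense, then f satisfies Δf ≤ α on Ω in the distributional sense. -/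
open Finset

/-- The Laplacian of `h` at `p`: the trace of the Hessian matrix. -/
noncomputable def lapl {n : ℕ} (h : (Fin n → ℝ) → ℝ) (p : Fin n → ℝ) : ℝ :=
  ∑ i, hess2 h p i i

/-!
Adding a constant to `f`, assume `f ≥ 1` on the support of a cutoff `η` which equals `1` on the
support of the test function `φ`. For small `l > 0` solve `u - l Δu = b` by Fourier multipliers,
where `b` is Schwartz and `l²`-close to `η (f - l α)`. The maximum principle bounds `u`, and
comparison with a multiple of `η` gives `u ≤ 1 ≤ f` where `η` vanishes. At an interior maximum of
`u - f`, a translate of `u` touches `f` from below, so the viscosity inequality turns the equation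
for `u` into `u ≤ f + l²`. Inserting this back, `Δu ≤ α + 2 l` on the support of `φ`. The Green
identity for the Schwartz functions `u` and `φ` gives `∫ f Δφ ≤ ∫ α φ + O(l)`; let `l → 0`.
-/

open MeasureTheory Topology Filter
open scoped ContDiff SchwartzMap Laplacian FourierTransform LineDeriv

section SecondDerivative

variable {E F : Type*} [NormedAddCommGroup E] [NormedSpace ℝ E]
  [NormedAddCommGroup F] [NormedSpace ℝ F]

theorem fderiv_fderiv_apply_eq_iteratedFDeriv {u : E → F} {x : E} (hu : ContDiffAt ℝ 2 u x)
    (v w : E) : fderiv ℝ (fun y ↦ fderiv ℝ u y v) x w = iteratedFDeriv ℝ 2 u x ![w, v] := by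
  have hu' : DifferentiableAt ℝ (fderiv ℝ u) x :=
    (hu.fderiv_right (m := 1) (by norm_num)).differentiableAt one_ne_zero
  simp [fderiv_clm_apply hu' (differentiableAt_const v), iteratedFDeriv_two_apply]

theorem deriv_deriv_comp_add_smul_eq_iteratedFDeriv {u : E → F} {x : E}
    (hu : ContDiffAt ℝ 2 u x) (v : E) :
    deriv (deriv fun t : ℝ ↦ u (x + t • v)) 0 = iteratedFDeriv ℝ 2 u x ![v, v] := by
  have hline (t : ℝ) : HasDerivAt (fun t : ℝ ↦ x + t • v) v t := by
    simpa using ((hasDerivAt_id t).smul_const v).const_add x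
  have hline_zero : Tendsto (fun t : ℝ ↦ x + t • v) (𝓝 0) (𝓝 x) := by
    simpa using (hline 0).continuousAt.tendsto
  have hderiv : (deriv fun t : ℝ ↦ u (x + t • v)) =ᶠ[𝓝 0] fun t ↦ fderiv ℝ u (x + t • v) v := by
    filter_upwards [hline_zero.eventually (hu.eventually (by simp))] with t ht
    exact ((ht.differentiableAt two_ne_zero).hasFDerivAt.comp_hasDerivAt t (hline t)).deriv
  have hdiff : DifferentiableAt ℝ (fun y ↦ fderiv ℝ u y v) (x + (0 : ℝ) • v) := by
    simpa using ((hu.fderiv_right (m := 1) (by norm_num)).clm_apply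
      contDiffAt_const).differentiableAt one_ne_zero
  rw [hderiv.deriv_eq, ← fderiv_fderiv_apply_eq_iteratedFDeriv hu]
  simpa [Function.comp_def] using (hdiff.hasFDerivAt.comp_hasDerivAt 0 (hline 0)).deriv

theorem deriv_deriv_nonpos_of_isLocalMax {g : ℝ → ℝ} {t : ℝ} (hmax : IsLocalMax g t)
    (hg : ContinuousAt g t) : deriv (deriv g) t ≤ 0 := by
  by_contra! hpos
  have hmin : IsLocalMin g t := isLocalMin_of_deriv_deriv_pos hpos hmax.deriv_eq_zero hg
  have hconst : g =ᶠ[𝓝 t] fun _ ↦ g t := by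
    filter_upwards [hmax, hmin] with y using le_antisymm
  have hzero : deriv (deriv g) t = 0 := by simpa using hconst.deriv.deriv_eq
  exact hpos.ne' hzero

theorem iteratedFDeriv_two_nonpos_of_isLocalMax {u : E → ℝ} {x : E} (hmax : IsLocalMax u x)
    (hu : ContDiffAt ℝ 2 u x) (v : E) : iteratedFDeriv ℝ 2 u x ![v, v] ≤ 0 := by
  have hline : ContinuousAt (fun t : ℝ ↦ x + t • v) 0 := by fun_prop
  rw [← deriv_deriv_comp_add_smul_eq_iteratedFDeriv hu]
  refine deriv_deriv_nonpos_of_isLocalMax (IsLocalMax.comp_continuous ?_ hline) ?_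
  · simpa using hmax
  · exact ContinuousAt.comp (by simpa using hu.continuousAt) hline

end SecondDerivative

section Laplacian

variable {E : Type*} [NormedAddCommGroup E] [InnerProductSpace ℝ E] [FiniteDimensional ℝ E]

theorem laplacian_nonpos_of_isLocalMax {u : E → ℝ} {x : E} (hmax : IsLocalMax u x)
    (hu : ContDiffAt ℝ 2 u x) : Δ u x ≤ 0 := by
  rw [InnerProductSpace.laplacian_eq_iteratedFDeriv_stdOrthonormalBasis]
  exact Finset.sum_nonpos fun _ _ ↦ iteratedFDeriv_two_nonpos_of_isLocalMax hmax hu _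

theorem le_of_sub_mul_laplacian_le {u : E → ℝ} (hu : ContDiff ℝ 2 u)
    (hu₀ : Tendsto u (cocompact E) (𝓝 0)) {l c : ℝ} (hl : 0 ≤ l) (hc : 0 ≤ c)
    (h : ∀ x, u x - l * Δ u x ≤ c) (x : E) : u x ≤ c := by
  by_contra! hx
  have hfar : ∀ᶠ y in cocompact E, u y ≤ u x :=
    (hu₀.eventually_lt_const (hc.trans_lt hx)).mono fun _ ↦ le_of_lt
  obtain ⟨z, hz⟩ := hu.continuous.exists_forall_ge' x hfar
  have hΔ : Δ u z ≤ 0 := laplacian_nonpos_of_isLocalMax (Eventually.of_forall hz) hu.contDiffAt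
  linarith [h z, hz x, mul_nonpos_of_nonneg_of_nonpos hl hΔ]

variable {F : Type*} [NormedAddCommGroup F] [NormedSpace ℝ F]

theorem laplacian_sub_const (f : E → F) (c : F) : Δ (fun x ↦ f x - c) = Δ f := by
  have hfderiv : (fderiv ℝ fun x ↦ f x - c) = fderiv ℝ f := funext fun _ ↦ fderiv_sub_const c
  simp only [InnerProductSpace.laplacian_eq_iteratedFDeriv_stdOrthonormalBasis,
    iteratedFDeriv_two_apply, hfderiv]

theorem tsupport_laplacian_subset (f : E → F) : tsupport (Δ f) ⊆ tsupport f := by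
  refine closure_minimal (fun x hx ↦ ?_) (isClosed_tsupport f)
  by_contra hxf
  have hzero : f =ᶠ[𝓝 x] fun _ ↦ 0 := notMem_tsupport_iff_eventuallyEq.1 hxf
  exact hx (by simp [(InnerProductSpace.laplacian_congr_nhds hzero).eq_of_nhds])

end Laplacian

section SchwartzResolvent

variable {E : Type*} [NormedAddCommGroup E] [InnerProductSpace ℝ E]

theorem hasTemperateGrowth_inv_one_add_mul_norm_sq {a : ℝ} (ha : 0 ≤ a) :
    (fun x : E ↦ (1 + a * ‖x‖ ^ 2)⁻¹).HasTemperateGrowth := by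
  have hscale := (Function.hasTemperateGrowth_one_add_norm_sq_rpow E (-1)).comp
    (√a • ContinuousLinearMap.id ℝ E).hasTemperateGrowth
  have hcomp : (fun x : E ↦ (1 + ‖x‖ ^ 2) ^ (-1 : ℝ)) ∘ (√a • ContinuousLinearMap.id ℝ E) =
      fun x ↦ (1 + a * ‖x‖ ^ 2)⁻¹ := by
    funext x
    simp [norm_smul, mul_pow, Real.sq_sqrt ha, Real.rpow_neg_one]
  exact hcomp ▸ hscale

variable [FiniteDimensional ℝ E] [MeasurableSpace E] [BorelSpace E]

section Complex

variable {F : Type*} [NormedAddCommGroup F] [NormedSpace ℂ F] [CompleteSpace F]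

theorem sub_smul_laplacian_eq_fourierMultiplierCLM (l : ℝ) (u : 𝓢(E, F)) :
    u - l • Δ u =
      SchwartzMap.fourierMultiplierCLM F (fun x : E ↦ 1 + l * (2 * Real.pi) ^ 2 * ‖x‖ ^ 2) u := by
  have hsq : (fun x : E ↦ ‖x‖ ^ 2).HasTemperateGrowth := by fun_prop
  have hsymbol : (fun x : E ↦ 1 + l * (2 * Real.pi) ^ 2 * ‖x‖ ^ 2) =
      (fun _ ↦ 1) + (l * (2 * Real.pi) ^ 2) • fun x ↦ ‖x‖ ^ 2 := rfl
  have hadd := SchwartzMap.smulLeftCLM_add (F := F)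
    (Function.HasTemperateGrowth.const (1 : ℝ) : (fun _ : E ↦ (1 : ℝ)).HasTemperateGrowth)
    (show ((l * (2 * Real.pi) ^ 2) • fun x : E ↦ ‖x‖ ^ 2).HasTemperateGrowth by fun_prop)
  rw [hsymbol, SchwartzMap.laplacian_eq_fourierMultiplierCLM,
    SchwartzMap.fourierMultiplierCLM_apply, SchwartzMap.fourierMultiplierCLM_apply, hadd,
    SchwartzMap.smulLeftCLM_smul hsq]
  simp [FourierTransform.fourierInv_add, FourierTransform.fourierInv_smul, smul_smul]

theorem exists_complex_schwartz_sub_smul_laplacian_eq {l : ℝ} (hl : 0 ≤ l) (b : 𝓢(E, F)) :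
    ∃ u : 𝓢(E, F), u - l • Δ u = b := by
  set g : E → ℝ := fun x ↦ 1 + l * (2 * Real.pi) ^ 2 * ‖x‖ ^ 2
  have hg : g.HasTemperateGrowth := by fun_prop
  have hg_inv : (g⁻¹).HasTemperateGrowth :=
    hasTemperateGrowth_inv_one_add_mul_norm_sq (by positivity)
  have hone : g * g⁻¹ = fun _ ↦ 1 := funext fun x ↦ mul_inv_cancel₀ (by positivity)
  refine ⟨SchwartzMap.fourierMultiplierCLM F g⁻¹ b, ?_⟩
  rw [sub_smul_laplacian_eq_fourierMultiplierCLM,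
    SchwartzMap.fourierMultiplierCLM_fourierMultiplierCLM_apply hg hg_inv, hone]
  simp

end Complex

theorem exists_schwartz_sub_smul_laplacian_eq {l : ℝ} (hl : 0 ≤ l) (b : 𝓢(E, ℝ)) :
    ∃ u : 𝓢(E, ℝ), ∀ x, u x - l * Δ u x = b x := by
  obtain ⟨U, hU⟩ := exists_complex_schwartz_sub_smul_laplacian_eq hl
    (b.postcompCLM Complex.ofRealCLM)
  refine ⟨U.postcompCLM Complex.reCLM, fun x ↦ ?_⟩
  have hre : Δ (Complex.reCLM ∘ U) x = Complex.reCLM (Δ (U : E → ℂ) x) :=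
    (U.smooth 2).contDiffAt.laplacian_CLM_comp_left
  have hx := congrArg Complex.re (DFunLike.congr_fun hU x)
  have hcoe : ⇑(U.postcompCLM Complex.reCLM) = Complex.reCLM ∘ U := rfl
  rw [SchwartzMap.laplacian_apply, hcoe, hre]
  simpa [SchwartzMap.laplacian_apply] using hx

end SchwartzResolvent

section SchwartzIntegral

variable {E F : Type*} [NormedAddCommGroup E] [InnerProductSpace ℝ E] [FiniteDimensional ℝ E]
  [MeasurableSpace E] [BorelSpace E] {μ : Measure E} [μ.IsAddHaarMeasure]
  [NormedAddCommGroup F] [NormedSpace ℝ F]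

theorem integral_lineDerivOp_eq_zero (v : E) (φ : 𝓢(E, F)) : ∫ x, ∂_{v} φ x ∂μ = 0 := by
  have hparts := integral_smul_fderiv_eq_neg_fderiv_smul_of_integrable (μ := μ) (𝕜 := ℝ)
    (f := fun _ ↦ 1) (g := φ) (v := v) (by simp)
    (by simpa [SchwartzMap.lineDerivOp_apply_eq_fderiv] using (∂_{v} φ).integrable (μ := μ))
    (by simpa using φ.integrable (μ := μ)) (by simp) fun x _ ↦ φ.differentiableAt
  simpa [SchwartzMap.lineDerivOp_apply_eq_fderiv] using hparts

theorem integral_laplacian_eq_zero (φ : 𝓢(E, F)) : ∫ x, Δ φ x ∂μ = 0 := by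
  simp only [SchwartzMap.laplacian_eq_sum (stdOrthonormalBasis ℝ E), _root_.sum_apply]
  rw [integral_finsetSum _ fun i _ ↦ SchwartzMap.integrable _]
  simp only [integral_lineDerivOp_eq_zero, Finset.sum_const_zero]

theorem integrable_schwartz_mul (u v : 𝓢(E, ℝ)) : Integrable (fun x ↦ u x * v x) μ :=
  (u.memLp 2 μ).integrable_mul (v.memLp 2 μ)

theorem integral_mul_laplacian_sub_laplacian_mul_eq_zero (u v : 𝓢(E, ℝ)) :
    ∫ x, (u x * Δ v x - Δ u x * v x) ∂μ = 0 := by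
  rw [integral_sub (integrable_schwartz_mul u (Δ v)) (integrable_schwartz_mul (Δ u) v),
    SchwartzMap.integral_mul_laplacian_right_eq_left, sub_self]

end SchwartzIntegral

section CompactSupport

variable {E : Type*} [NormedAddCommGroup E] [NormedSpace ℝ E] [FiniteDimensional ℝ E]

theorem exists_schwartz_cutoff {K U : Set E} (hK : IsCompact K) (hU : IsOpen U) (hKU : K ⊆ U) :
    ∃ η : 𝓢(E, ℝ), HasCompactSupport η ∧ tsupport η ⊆ U ∧ (∀ x, η x ∈ Set.Icc 0 1) ∧
      ∀ x ∈ K, η x = 1 := by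
  obtain ⟨L, hL, hKL, hLU⟩ := exists_compact_between hK hU hKU
  obtain ⟨η, hη_one, hη_zero, hη_mem⟩ := exists_contMDiffMap_one_nhds_of_subset_interior (n := ⊤)
    (modelWithCornersSelf ℝ E) hK.isClosed hKL
  have hη_supp : tsupport η ⊆ L :=
    closure_minimal (fun x hx ↦ by_contra fun hxL ↦ hx (hη_zero x hxL)) hL.isClosed
  have hη_compact : HasCompactSupport η := hL.of_isClosed_subset (isClosed_tsupport _) hη_supp
  exact ⟨hη_compact.toSchwartzMap η.contMDiff.contDiff, hη_compact, hη_supp.trans hLU, hη_mem,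
    fun x hx ↦ hη_one.self_of_nhdsSet x hx⟩

theorem exists_schwartz_abs_sub_lt {g : E → ℝ} (hg : Continuous g)
    (hg_compact : HasCompactSupport g) {ε : ℝ} (hε : 0 < ε) :
    ∃ b : 𝓢(E, ℝ), ∀ x, |b x - g x| < ε := by
  obtain ⟨b, hb, hbg, hb_supp⟩ := hg.exists_contDiff_approx ⊤ continuous_const fun _ ↦ hε
  exact ⟨(hg_compact.mono hb_supp).toSchwartzMap hb, hbg⟩

variable {X : Type*} [TopologicalSpace X]

theorem continuous_mul_of_tsupport_subset {Ω : Set X} (hΩ : IsOpen Ω) {g ψ : X → ℝ}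
    (hg : ContinuousOn g Ω) (hψ : Continuous ψ) (hψΩ : tsupport ψ ⊆ Ω) :
    Continuous fun x ↦ g x * ψ x := by
  refine continuous_of_tsupport fun x hx ↦ ?_
  have hxΩ : x ∈ Ω := hψΩ (tsupport_mul_subset_right hx)
  exact (hg.continuousAt (hΩ.mem_nhds hxΩ)).mul hψ.continuousAt

theorem abs_sub_mul_mul_cutoff_le {f α η : X → ℝ} (hη_mem : ∀ x, η x ∈ Set.Icc 0 1) {l M : ℝ}
    (hfM : ∀ x ∈ tsupport η, |f x| ≤ M) (hαM : ∀ x ∈ tsupport η, |α x| ≤ M) (hl : 0 ≤ l)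
    (hl_one : l ≤ 1) (x : X) : |(f x - l * α x) * η x| ≤ 2 * M * η x := by
  by_cases hx : x ∈ tsupport η
  · have hlα : |l * α x| ≤ |α x| := by
      rw [abs_mul, abs_of_nonneg hl]
      exact mul_le_of_le_one_left (abs_nonneg _) hl_one
    rw [abs_mul, abs_of_nonneg (hη_mem x).1]
    refine mul_le_mul_of_nonneg_right ?_ (hη_mem x).1
    linarith [abs_sub (f x) (l * α x), hfM x hx, hαM x hx]
  · simp [image_eq_zero_of_notMem_tsupport hx]

end CompactSupport

section MaximumPrinciple

variable {E : Type*} [NormedAddCommGroup E] [InnerProductSpace ℝ E] [FiniteDimensional ℝ E]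

theorem schwartz_le_add_of_sub_mul_laplacian_le {u w : 𝓢(E, ℝ)} {l c : ℝ} (hl : 0 ≤ l)
    (hc : 0 ≤ c) (h : ∀ x, u x - l * Δ u x ≤ w x - l * Δ w x + c) (x : E) : u x ≤ w x + c := by
  have hΔ (y : E) : Δ (⇑(u - w)) y = Δ u y - Δ w y := by
    simp only [SchwartzMap.laplacian_apply]
    exact (u.smooth 2).contDiffAt.laplacian_sub (w.smooth 2).contDiffAt
  have hdiff := le_of_sub_mul_laplacian_le ((u - w).smooth 2) (u - w).tendsto_cocompact hl hc
    (fun y ↦ by rw [hΔ, sub_apply]; linarith [h y]) x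
  rw [sub_apply] at hdiff
  linarith

theorem abs_schwartz_le_of_abs_sub_mul_laplacian_le {u : 𝓢(E, ℝ)} {l c : ℝ} (hl : 0 ≤ l)
    (h : ∀ x, |u x - l * Δ u x| ≤ c) (x : E) : |u x| ≤ c := by
  have hc : 0 ≤ c := (abs_nonneg _).trans (h x)
  have hΔ_zero (y : E) : Δ (0 : 𝓢(E, ℝ)) y = 0 := by
    rw [← SchwartzMap.laplacianCLM_eq', map_zero, zero_apply]
  have hupper := schwartz_le_add_of_sub_mul_laplacian_le (u := u) (w := 0) hl hc
    (fun y ↦ by simpa [hΔ_zero] using (abs_le.1 (h y)).2) x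
  have hlower := schwartz_le_add_of_sub_mul_laplacian_le (u := 0) (w := u) hl hc
    (fun y ↦ by simpa [hΔ_zero] using neg_le_iff_add_nonneg.1 (abs_le.1 (h y)).1) x
  simp only [zero_apply] at hupper hlower
  exact abs_le.2 ⟨by linarith, by linarith⟩

end MaximumPrinciple

section Viscosity

variable {E : Type*} [NormedAddCommGroup E] [InnerProductSpace ℝ E] [FiniteDimensional ℝ E]

/-- The inequality `Δ f ≤ α` at every point of `Ω` in the viscosity sense: every `C²` function
touching `f` from below at a point of `Ω` has Laplacian at most `α` there. -/
def ViscosityLaplacianLEOn (f α : E → ℝ) (Ω : Set E) : Prop :=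
  ∀ p ∈ Ω, ∀ (U : Set E) (h : E → ℝ), IsOpen U → p ∈ U → U ⊆ Ω → ContDiffOn ℝ 2 h U →
    h p = f p → (∀ x ∈ U, h x ≤ f x) → Δ h p ≤ α p

namespace ViscosityLaplacianLEOn

variable {f α : E → ℝ} {Ω : Set E}

theorem add_const (hvisc : ViscosityLaplacianLEOn f α Ω) (c : ℝ) :
    ViscosityLaplacianLEOn (fun x ↦ f x + c) α Ω := by
  intro p hp U h hU hpU hUΩ hh hhp hle
  rw [← laplacian_sub_const]
  exact hvisc p hp U (fun x ↦ h x - c) hU hpU hUΩ (hh.sub contDiffOn_const) (by simp [hhp])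
    fun x hx ↦ sub_le_iff_le_add.2 (hle x hx)

theorem le_add_of_sub_mul_laplacian_le (hvisc : ViscosityLaplacianLEOn f α Ω)
    (hf : ContinuousOn f Ω) {K V : Set E} (hK : IsCompact K) (hKΩ : K ⊆ Ω) (hV : IsOpen V)
    (hVK : V ⊆ K) {u : E → ℝ} (hu : ContDiff ℝ 2 u) {l δ : ℝ} (hl : 0 ≤ l)
    (hin : ∀ x ∈ V, u x - l * Δ u x ≤ f x - l * α x + δ) (hout : ∀ x ∈ K \ V, u x ≤ f x + δ)
    {x : E} (hx : x ∈ K) : u x ≤ f x + δ := by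
  obtain ⟨z, hzK, hz⟩ := hK.exists_isMaxOn ⟨x, hx⟩ (hu.continuous.continuousOn.sub (hf.mono hKΩ))
  have hsub (y : E) (hy : y ∈ K) : u y - f y ≤ u z - f z := hz hy
  suffices hz_le : u z ≤ f z + δ by linarith [hsub x hx]
  by_cases hzV : z ∈ V
  · have hΔ : Δ u z ≤ α z := by
      rw [← laplacian_sub_const u (u z - f z)]
      refine hvisc z (hKΩ hzK) V _ hV hzV (hVK.trans hKΩ)
        (hu.sub contDiff_const).contDiffOn (by ring) fun y hy ↦ ?_
      linarith [hsub y (hVK hy)]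
    linarith [hin z hzV, mul_le_mul_of_nonneg_left hΔ hl]
  · exact hout z ⟨hzK, hzV⟩

end ViscosityLaplacianLEOn

end Viscosity

section Approximation

variable {E : Type*} [NormedAddCommGroup E] [InnerProductSpace ℝ E] [FiniteDimensional ℝ E]

theorem exists_schwartz_abs_sub_mul_laplacian_sub_lt [MeasurableSpace E] [BorelSpace E]
    {g : E → ℝ} (hg : Continuous g) (hg_compact : HasCompactSupport g) {l ε : ℝ} (hl : 0 ≤ l)
    (hε : 0 < ε) : ∃ u : 𝓢(E, ℝ), ∀ x, |u x - l * Δ u x - g x| < ε := by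
  obtain ⟨b, hb⟩ := exists_schwartz_abs_sub_lt hg hg_compact hε
  obtain ⟨u, hu⟩ := exists_schwartz_sub_smul_laplacian_eq hl b
  exact ⟨u, fun x ↦ hu x ▸ hb x⟩

theorem schwartz_le_mul_add_of_sub_mul_laplacian_le {u η : 𝓢(E, ℝ)} {l c ε L : ℝ} (hl : 0 ≤ l)
    (hc : 0 ≤ c) (hε : 0 ≤ ε) (hL : ∀ x, |Δ η x| ≤ L)
    (h : ∀ x, u x - l * Δ u x ≤ c * η x + ε) (x : E) : u x ≤ c * η x + (ε + l * c * L) := by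
  have hL₀ : 0 ≤ L := (abs_nonneg _).trans (hL x)
  have hΔ (y : E) : Δ (c • η) y = c * Δ η y := by
    rw [← SchwartzMap.laplacianCLM_eq', map_smul, smul_apply, SchwartzMap.laplacianCLM_eq',
      smul_eq_mul]
  refine schwartz_le_add_of_sub_mul_laplacian_le (w := c • η) hl (by positivity) (fun y ↦ ?_) x
  have hη : l * c * Δ η y ≤ l * c * L :=
    mul_le_mul_of_nonneg_left (abs_le.1 (hL y)).2 (by positivity)
  rw [hΔ, smul_apply, smul_eq_mul]
  linarith [h y]

variable {f α : E → ℝ} {Ω : Set E} {η : 𝓢(E, ℝ)} {l : ℝ}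

theorem ViscosityLaplacianLEOn.le_add_of_abs_sub_mul_laplacian_sub_le
    (hvisc : ViscosityLaplacianLEOn f α Ω) (hf : ContinuousOn f Ω)
    (hη_compact : HasCompactSupport η) (hηΩ : tsupport η ⊆ Ω) (hη_mem : ∀ x, η x ∈ Set.Icc 0 1)
    (hl : 0 ≤ l) {δ : ℝ} (hδ : 0 ≤ δ) (hf_one : ∀ x ∈ tsupport η, 1 ≤ f x)
    (hα : ∀ x ∈ tsupport η, l * α x ≤ 1) {u : 𝓢(E, ℝ)}
    (hu : ∀ x, |u x - l * Δ u x - (f x - l * α x) * η x| ≤ δ) (hu_one : ∀ x, η x = 0 → u x ≤ 1) :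
    ∀ x ∈ tsupport η, u x ≤ f x + δ := by
  refine fun x ↦ hvisc.le_add_of_sub_mul_laplacian_le hf hη_compact hηΩ
    η.continuous.isOpen_support (subset_tsupport η) (u.smooth 2) hl (fun y hy ↦ ?_)
    fun y hy ↦ ?_
  · have hyη := subset_tsupport η hy
    have hcutoff : (f y - l * α y) * η y ≤ f y - l * α y :=
      mul_le_of_le_one_right (by linarith [hf_one y hyη, hα y hyη]) (hη_mem y).2
    rw [← SchwartzMap.laplacian_apply]
    linarith [(abs_le.1 (hu y)).2]
  · linarith [hf_one y hy.1, hu_one y (Function.notMem_support.1 hy.2)]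

theorem ViscosityLaplacianLEOn.exists_schwartz_le_add_sq [MeasurableSpace E] [BorelSpace E]
    (hvisc : ViscosityLaplacianLEOn f α Ω) (hΩ : IsOpen Ω) (hf : ContinuousOn f Ω)
    (hα : ContinuousOn α Ω) (hη_compact : HasCompactSupport η) (hηΩ : tsupport η ⊆ Ω)
    (hη_mem : ∀ x, η x ∈ Set.Icc 0 1) (hf_one : ∀ x ∈ tsupport η, 1 ≤ f x) {L M : ℝ}
    (hM : 0 ≤ M) (hL : ∀ x, |Δ η x| ≤ L) (hfM : ∀ x ∈ tsupport η, |f x| ≤ M)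
    (hαM : ∀ x ∈ tsupport η, |α x| ≤ M) (hl : 0 < l) (hl_one : l ≤ 1) (hlM : l * M ≤ 1)
    (hlL : l ^ 2 + l * (2 * M) * L ≤ 1) :
    ∃ u : 𝓢(E, ℝ), (∀ x, |u x| ≤ 2 * M + 1) ∧
      (∀ x, |u x - l * Δ u x - (f x - l * α x) * η x| ≤ l ^ 2) ∧
      ∀ x ∈ tsupport η, u x ≤ f x + l ^ 2 := by
  have hg : Continuous fun x ↦ (f x - l * α x) * η x :=
    continuous_mul_of_tsupport_subset hΩ (hf.sub (hα.const_smul l)) η.continuous hηΩ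
  obtain ⟨u, hu⟩ := exists_schwartz_abs_sub_mul_laplacian_sub_lt hg hη_compact.mul_left hl.le
    (show 0 < l ^ 2 by positivity)
  have hdata (x : E) : |u x - l * Δ u x| ≤ 2 * M * η x + l ^ 2 := by
    linarith [abs_sub_abs_le_abs_sub (u x - l * Δ u x) ((f x - l * α x) * η x), hu x,
      abs_sub_mul_mul_cutoff_le hη_mem hfM hαM hl.le hl_one x]
  have hbarrier (x : E) (hx : η x = 0) : u x ≤ 1 := by
    have hle := schwartz_le_mul_add_of_sub_mul_laplacian_le hl.le (by positivity) (sq_nonneg l) hL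
      (fun y ↦ (le_abs_self _).trans (hdata y)) x
    rw [hx] at hle
    linarith
  have hlα (x : E) (hx : x ∈ tsupport η) : l * α x ≤ 1 :=
    (mul_le_mul_of_nonneg_left (abs_le.1 (hαM x hx)).2 hl.le).trans hlM
  refine ⟨u, abs_schwartz_le_of_abs_sub_mul_laplacian_le hl.le fun x ↦ ?_, fun x ↦ (hu x).le,
    hvisc.le_add_of_abs_sub_mul_laplacian_sub_le hf hη_compact hηΩ hη_mem hl.le (sq_nonneg l)
      hf_one hlα (fun x ↦ (hu x).le) hbarrier⟩
  linarith [hdata x, mul_le_of_le_one_right (by positivity : 0 ≤ 2 * M) (hη_mem x).2,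
    pow_le_one₀ (n := 2) hl.le hl_one]

theorem abs_sub_le_mul_of_abs_sub_sub_mul_le {r t a M : ℝ} (hl : 0 ≤ l) (hl_one : l ≤ 1)
    (ha : |a| ≤ M) (h : |r - (t - l * a)| ≤ l ^ 2) : |r - t| ≤ l * (M + 1) :=
  calc |r - t| = |r - (t - l * a) - l * a| := by ring_nf
    _ ≤ |r - (t - l * a)| + |l * a| := abs_sub _ _
    _ = |r - (t - l * a)| + l * |a| := by rw [abs_mul, abs_of_nonneg hl]
    _ ≤ l * 1 + l * M := by
      refine add_le_add (h.trans ?_) (mul_le_mul_of_nonneg_left ha hl)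
      exact sq l ▸ mul_le_mul_of_nonneg_left hl_one hl
    _ = l * (M + 1) := by ring

theorem ViscosityLaplacianLEOn.exists_eventually_schwartz_laplacian_le [MeasurableSpace E]
    [BorelSpace E] (hvisc : ViscosityLaplacianLEOn f α Ω) (hΩ : IsOpen Ω) (hf : ContinuousOn f Ω)
    (hα : ContinuousOn α Ω) (hη_compact : HasCompactSupport η) (hηΩ : tsupport η ⊆ Ω)
    (hη_mem : ∀ x, η x ∈ Set.Icc 0 1) (hf_one : ∀ x ∈ tsupport η, 1 ≤ f x) :
    ∃ C, ∀ᶠ l in 𝓝[>] (0 : ℝ), ∃ u : 𝓢(E, ℝ), (∀ x, |u x| ≤ C) ∧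
      ∀ x, η x = 1 → |u x - l * Δ u x - f x| ≤ l * C ∧ Δ u x ≤ α x + 2 * l := by
  obtain ⟨M, hM⟩ := hη_compact.isCompact.exists_bound_of_continuousOn
    ((hf.prodMk hα).mono hηΩ)
  have hfM (x) (hx : x ∈ tsupport η) : |f x| ≤ |M| :=
    (norm_fst_le (f x, α x)).trans ((hM x hx).trans (le_abs_self M))
  have hαM (x) (hx : x ∈ tsupport η) : |α x| ≤ |M| :=
    (norm_snd_le (f x, α x)).trans ((hM x hx).trans (le_abs_self M))
  set L := SchwartzMap.seminorm ℝ 0 0 (Δ η)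
  have hL (x : E) : |Δ η x| ≤ L := (Δ η).norm_le_seminorm ℝ x
  have hsmall (g : ℝ → ℝ) (hg : Continuous g) (hg₀ : g 0 < 1) : ∀ᶠ l in 𝓝[>] (0 : ℝ), g l ≤ 1 :=
    ((hg.tendsto 0).eventually_lt_const hg₀).filter_mono nhdsWithin_le_nhds |>.mono fun _ ↦ le_of_lt
  refine ⟨2 * |M| + 1, ?_⟩
  filter_upwards [self_mem_nhdsWithin, hsmall id continuous_id (by simp),
    hsmall (· * |M|) (by fun_prop) (by simp),
    hsmall (fun l ↦ l ^ 2 + l * (2 * |M|) * L) (by fun_prop) (by simp)] with l hl hl_one hlM hlL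
  obtain ⟨u, hu_le, hu_res, hu_comp⟩ := hvisc.exists_schwartz_le_add_sq hΩ hf hα hη_compact hηΩ
    hη_mem hf_one (abs_nonneg M) hL hfM hαM hl hl_one hlM hlL
  refine ⟨u, hu_le, fun x hx ↦ ?_⟩
  have hx_supp : x ∈ tsupport η := subset_tsupport η (by simp [hx])
  have hres : |u x - l * Δ u x - (f x - l * α x)| ≤ l ^ 2 := by simpa [hx] using hu_res x
  constructor
  · refine (abs_sub_le_mul_of_abs_sub_sub_mul_le hl.le hl_one (hαM x hx_supp) hres).trans ?_
    exact mul_le_mul_of_nonneg_left (by linarith [abs_nonneg M]) hl.le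
  · refine le_of_mul_le_mul_left ?_ hl
    linarith [(abs_le.1 hres).1, hu_comp x hx_supp]

theorem mul_laplacian_sub_mul_le_of_approx {φ u : 𝓢(E, ℝ)} (hφ : ∀ x, 0 ≤ φ x) {C : ℝ}
    (hl : 0 ≤ l) (huC : ∀ x, |u x| ≤ C)
    (hu : ∀ x ∈ tsupport φ, |u x - l * Δ u x - f x| ≤ l * C ∧ Δ u x ≤ α x + 2 * l) (x : E) :
    f x * Δ φ x - α x * φ x ≤
      (u x * Δ φ x - Δ u x * φ x) + l * (u x * Δ (Δ φ) x - Δ u x * Δ φ x) +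
        l * (2 * φ x + C * |Δ φ x| + C * |Δ (Δ φ) x|) := by
  have habs (a b c : ℝ) (ha : |a| ≤ c) : -(a * b) ≤ c * |b| :=
    (neg_le_abs _).trans (abs_mul a b ▸ mul_le_mul_of_nonneg_right ha (abs_nonneg b))
  have hΔΔ := mul_le_mul_of_nonneg_left (habs (u x) (Δ (Δ φ) x) C (huC x)) hl
  by_cases hx : x ∈ tsupport φ
  · have hfΔ := habs _ (Δ φ x) _ (hu x hx).1
    have hαφ := mul_le_mul_of_nonneg_right (hu x hx).2 (hφ x)
    linarith
  · have hφx : φ x = 0 := image_eq_zero_of_notMem_tsupport hx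
    have hΔφx : Δ φ x = 0 := by
      rw [SchwartzMap.laplacian_apply]
      exact image_eq_zero_of_notMem_tsupport fun h ↦ hx (tsupport_laplacian_subset _ h)
    simp only [hφx, hΔφx, abs_zero]
    linarith

end Approximation

section Distributional

variable {E : Type*} [NormedAddCommGroup E] [InnerProductSpace ℝ E] [FiniteDimensional ℝ E]
  [MeasurableSpace E] [BorelSpace E]

/-- The inequality `Δ f ≤ α` on `Ω` in the distributional sense. -/
def DistributionalLaplacianLEOn (f α : E → ℝ) (Ω : Set E) : Prop :=
  ∀ φ : E → ℝ, ContDiff ℝ ∞ φ → HasCompactSupport φ → tsupport φ ⊆ Ω → (∀ x, 0 ≤ φ x) →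
    ∫ x in Ω, f x * Δ φ x ≤ ∫ x in Ω, α x * φ x

variable {f α : E → ℝ} {Ω : Set E}

theorem integral_mul_laplacian_le_of_approx {μ : Measure E} [μ.IsAddHaarMeasure] {φ u : 𝓢(E, ℝ)}
    (hφ : ∀ x, 0 ≤ φ x) (hfφ : Integrable (fun x ↦ f x * Δ φ x) μ)
    (hαφ : Integrable (fun x ↦ α x * φ x) μ) {l C : ℝ} (hl : 0 ≤ l) (huC : ∀ x, |u x| ≤ C)
    (hu : ∀ x ∈ tsupport φ, |u x - l * Δ u x - f x| ≤ l * C ∧ Δ u x ≤ α x + 2 * l) :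
    ∫ x, f x * Δ φ x ∂μ ≤ (∫ x, α x * φ x ∂μ) +
      l * ∫ x, (2 * φ x + C * |Δ φ x| + C * |Δ (Δ φ) x|) ∂μ := by
  have hgreen (v : 𝓢(E, ℝ)) : Integrable (fun x ↦ u x * Δ v x - Δ u x * v x) μ :=
    (integrable_schwartz_mul u (Δ v)).sub (integrable_schwartz_mul (Δ u) v)
  have herror : Integrable (fun x ↦ 2 * φ x + C * |Δ φ x| + C * |Δ (Δ φ) x|) μ :=
    ((φ.integrable.const_mul 2).add ((Δ φ).integrable.abs.const_mul C)).add
      ((Δ (Δ φ)).integrable.abs.const_mul C)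
  have hgreen_sum : Integrable
      (fun x ↦ (u x * Δ φ x - Δ u x * φ x) + l * (u x * Δ (Δ φ) x - Δ u x * Δ φ x)) μ :=
    (hgreen φ).add ((hgreen (Δ φ)).const_mul l)
  have hmono := integral_mono (hfφ.sub hαφ) (hgreen_sum.add (herror.const_mul l))
    (mul_laplacian_sub_mul_le_of_approx hφ hl huC hu)
  simp only [Pi.sub_apply, Pi.add_apply] at hmono
  rw [integral_sub hfφ hαφ, integral_add hgreen_sum (herror.const_mul l),
    integral_add (hgreen φ) ((hgreen (Δ φ)).const_mul l),
    integral_const_mul, integral_const_mul, integral_mul_laplacian_sub_laplacian_mul_eq_zero,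
    integral_mul_laplacian_sub_laplacian_mul_eq_zero] at hmono
  linarith

theorem integrable_mul_of_tsupport_subset (hΩ : IsOpen Ω) {g ψ : E → ℝ} (hg : ContinuousOn g Ω)
    (hψ : Continuous ψ) (hψ_compact : HasCompactSupport ψ) (hψΩ : tsupport ψ ⊆ Ω) :
    Integrable fun x ↦ g x * ψ x :=
  (continuous_mul_of_tsupport_subset hΩ hg hψ hψΩ).integrable_of_hasCompactSupport
    hψ_compact.mul_left

theorem ViscosityLaplacianLEOn.integral_mul_laplacian_le_of_one_le
    (hvisc : ViscosityLaplacianLEOn f α Ω) (hΩ : IsOpen Ω) (hf : ContinuousOn f Ω)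
    (hα : ContinuousOn α Ω) {η φ : 𝓢(E, ℝ)} (hη_compact : HasCompactSupport η)
    (hηΩ : tsupport η ⊆ Ω) (hη_mem : ∀ x, η x ∈ Set.Icc 0 1)
    (hf_one : ∀ x ∈ tsupport η, 1 ≤ f x) (hφ : ∀ x, 0 ≤ φ x) (hηφ : ∀ x ∈ tsupport φ, η x = 1)
    (hfφ : Integrable fun x ↦ f x * Δ φ x) (hαφ : Integrable fun x ↦ α x * φ x) :
    ∫ x, f x * Δ φ x ≤ ∫ x, α x * φ x := by
  obtain ⟨C, hC⟩ := hvisc.exists_eventually_schwartz_laplacian_le hΩ hf hα hη_compact hηΩ hη_mem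
    hf_one
  have hlim : Tendsto (fun l ↦ (∫ x, α x * φ x) +
      l * ∫ x, (2 * φ x + C * |Δ φ x| + C * |Δ (Δ φ) x|)) (𝓝[>] 0) (𝓝 (∫ x, α x * φ x)) :=
    tendsto_nhdsWithin_of_tendsto_nhds (Continuous.tendsto' (by fun_prop) _ _ (by simp))
  refine ge_of_tendsto hlim ?_
  filter_upwards [hC, self_mem_nhdsWithin] with l ⟨u, huC, hu⟩ hl
  exact integral_mul_laplacian_le_of_approx hφ hfφ hαφ hl.le huC fun x hx ↦ hu x (hηφ x hx)

theorem ViscosityLaplacianLEOn.integral_mul_laplacian_le (hvisc : ViscosityLaplacianLEOn f α Ω)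
    (hΩ : IsOpen Ω) (hf : ContinuousOn f Ω) (hα : ContinuousOn α Ω) {φ : 𝓢(E, ℝ)}
    (hφ_compact : HasCompactSupport φ) (hφΩ : tsupport φ ⊆ Ω) (hφ : ∀ x, 0 ≤ φ x) :
    ∫ x, f x * Δ φ x ≤ ∫ x, α x * φ x := by
  have hcoe : ⇑(Δ φ : 𝓢(E, ℝ)) = Δ (φ : E → ℝ) := funext φ.laplacian_apply
  have hΔφ : tsupport ⇑(Δ φ : 𝓢(E, ℝ)) ⊆ tsupport φ := hcoe ▸ tsupport_laplacian_subset φ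
  obtain ⟨η, hη_compact, hηΩ, hη_mem, hηφ⟩ := exists_schwartz_cutoff hφ_compact hΩ hφΩ
  obtain ⟨M, hM⟩ := hη_compact.isCompact.exists_bound_of_continuousOn (hf.mono hηΩ)
  have hfφ : Integrable fun x ↦ f x * Δ φ x := integrable_mul_of_tsupport_subset hΩ hf
    (Δ φ).continuous (hφ_compact.of_isClosed_subset (isClosed_tsupport _) hΔφ) (hΔφ.trans hφΩ)
  have hcφ : Integrable fun x ↦ (M + 1) * Δ φ x := (Δ φ).integrable.const_mul _
  have hadd (x : E) : (f x + (M + 1)) * Δ φ x = f x * Δ φ x + (M + 1) * Δ φ x := add_mul _ _ _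
  have hshift : ∫ x, (f x + (M + 1)) * Δ φ x = ∫ x, f x * Δ φ x := by
    simp only [hadd]
    rw [integral_add hfφ hcφ, integral_const_mul, integral_laplacian_eq_zero, mul_zero, add_zero]
  rw [← hshift]
  refine (hvisc.add_const (M + 1)).integral_mul_laplacian_le_of_one_le hΩ
    (hf.add continuousOn_const) hα hη_compact hηΩ hη_mem (fun x hx ↦ ?_) hφ hηφ ?_
    (integrable_mul_of_tsupport_subset hΩ hα φ.continuous hφ_compact hφΩ)
  · linarith [(abs_le.1 (hM x hx)).1]
  · simpa only [hadd] using! hfφ.add hcφ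

theorem viscosity_implies_distributional_laplacian_general (hΩ : IsOpen Ω)
    (hf : ContinuousOn f Ω) (hα : ContinuousOn α Ω) (hvisc : ViscosityLaplacianLEOn f α Ω) :
    DistributionalLaplacianLEOn f α Ω := by
  intro φ hφ_smooth hφ_compact hφΩ hφ
  have hφ_zero (x : E) (hx : x ∉ Ω) : φ x = 0 :=
    image_eq_zero_of_notMem_tsupport fun h ↦ hx (hφΩ h)
  have hΔφ_zero (x : E) (hx : x ∉ Ω) : Δ φ x = 0 :=
    image_eq_zero_of_notMem_tsupport fun h ↦ hx (hφΩ (tsupport_laplacian_subset φ h))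
  rw [setIntegral_eq_integral_of_forall_compl_eq_zero fun x hx ↦ by simp [hΔφ_zero x hx],
    setIntegral_eq_integral_of_forall_compl_eq_zero fun x hx ↦ by simp [hφ_zero x hx]]
  have hle := hvisc.integral_mul_laplacian_le hΩ hf hα
    (φ := hφ_compact.toSchwartzMap hφ_smooth) hφ_compact hφΩ hφ
  simp only [SchwartzMap.laplacian_apply] at hle
  exact hle

end Distributional

section EuclideanCoordinates

variable {n : ℕ} {f α : (Fin n → ℝ) → ℝ} {Ω : Set (Fin n → ℝ)}

theorem lapl_eq_sum_iteratedFDeriv {h : (Fin n → ℝ) → ℝ} {p : Fin n → ℝ}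
    (hh : ContDiffAt ℝ 2 h p) :
    lapl h p = ∑ i, iteratedFDeriv ℝ 2 h p ![Pi.single i 1, Pi.single i 1] :=
  Finset.sum_congr rfl fun _ _ ↦ fderiv_fderiv_apply_eq_iteratedFDeriv hh _ _

theorem lapl_comp_toLp {h : EuclideanSpace ℝ (Fin n) → ℝ} {p : Fin n → ℝ}
    (hh : ContDiffAt ℝ 2 h (WithLp.toLp 2 p)) :
    lapl (h ∘ WithLp.toLp 2) p = Δ h (WithLp.toLp 2 p) := by
  let e := (EuclideanSpace.equiv (Fin n) ℝ).symm
  have hcomp : iteratedFDeriv ℝ 2 (h ∘ e) p =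
      (iteratedFDeriv ℝ 2 h (e p)).compContinuousLinearMap fun _ ↦ e := by
    simpa only [Set.preimage_univ, iteratedFDerivWithin_univ] using
      e.iteratedFDerivWithin_comp_right h uniqueDiffOn_univ (Set.mem_univ (e p)) 2
  have hcoe : (WithLp.toLp 2 : (Fin n → ℝ) → EuclideanSpace ℝ (Fin n)) = e := rfl
  rw [hcoe] at hh ⊢
  rw [lapl_eq_sum_iteratedFDeriv (hh.comp p e.contDiff.contDiffAt), hcomp,
    InnerProductSpace.laplacian_eq_iteratedFDeriv_orthonormalBasis h
      (EuclideanSpace.basisFun (Fin n) ℝ)]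
  refine Finset.sum_congr rfl fun i _ ↦ ?_
  have hbasis : EuclideanSpace.basisFun (Fin n) ℝ i = e (Pi.single i 1) :=
    EuclideanSpace.basisFun_apply _ _ i
  rw [ContinuousMultilinearMap.compContinuousLinearMap_apply, hbasis]
  congr 1
  funext j
  fin_cases j <;> rfl

theorem viscosityLaplacianLEOn_comp_ofLp
    (hvisc : ∀ p ∈ Ω, ∀ (U : Set (Fin n → ℝ)) (h : (Fin n → ℝ) → ℝ),
      IsOpen U → p ∈ U → U ⊆ Ω → ContDiffOn ℝ 2 h U → h p = f p →
      (∀ x ∈ U, h x ≤ f x) → lapl h p ≤ α p) :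
    ViscosityLaplacianLEOn (E := EuclideanSpace ℝ (Fin n)) (f ∘ WithLp.ofLp) (α ∘ WithLp.ofLp)
      (WithLp.ofLp ⁻¹' Ω) := by
  intro p hp U h hU hpU hUΩ hh hhp hle
  have hlapl := lapl_comp_toLp (p := p.ofLp) (hh.contDiffAt (hU.mem_nhds hpU))
  rw [WithLp.toLp_ofLp] at hlapl
  rw [← hlapl]
  exact hvisc p.ofLp hp (WithLp.toLp 2 ⁻¹' U) (h ∘ WithLp.toLp 2)
    (hU.preimage (PiLp.continuous_toLp 2 _)) hpU (fun x hx ↦ hUΩ hx)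
    (hh.comp (PiLp.contDiff_toLp).contDiffOn fun x hx ↦ hx) hhp fun x hx ↦ hle _ hx

theorem DistributionalLaplacianLEOn.setIntegral_mul_lapl_le
    (hdist : DistributionalLaplacianLEOn (E := EuclideanSpace ℝ (Fin n)) (f ∘ WithLp.ofLp)
      (α ∘ WithLp.ofLp) (WithLp.ofLp ⁻¹' Ω))
    {φ : (Fin n → ℝ) → ℝ} (hφ_smooth : ContDiff ℝ ∞ φ) (hφ_compact : HasCompactSupport φ)
    (hφΩ : tsupport φ ⊆ Ω) (hφ : ∀ x, 0 ≤ φ x) :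
    ∫ x in Ω, f x * lapl φ x ≤ ∫ x in Ω, α x * φ x := by
  let e := EuclideanSpace.equiv (Fin n) ℝ
  have hφe_smooth : ContDiff ℝ ∞ (φ ∘ e) := hφ_smooth.comp e.contDiff
  have hlapl (x : EuclideanSpace ℝ (Fin n)) : lapl φ (e x) = Δ (φ ∘ e) x :=
    lapl_comp_toLp (h := φ ∘ e) (p := e x) (contDiff_infty.1 hφe_smooth 2).contDiffAt
  have htransfer (g : (Fin n → ℝ) → ℝ) : ∫ x in e ⁻¹' Ω, g (e x) = ∫ x in Ω, g x :=
    (PiLp.volume_preserving_ofLp (Fin n)).setIntegral_preimage_emb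
      (MeasurableEquiv.toLp 2 (Fin n → ℝ)).symm.measurableEmbedding g Ω
  rw [← htransfer, ← htransfer]
  simp only [hlapl]
  refine hdist (φ ∘ e) hφe_smooth (hφ_compact.comp_homeomorph e.toHomeomorph) ?_ fun x ↦ hφ (e x)
  exact (tsupport_comp_subset_preimage φ e.continuous).trans (Set.preimage_mono hφΩ)

end EuclideanCoordinates

/-- If `Δ f ≤ α` holds at every point of `Ω` in the viscosity sense, then it holds on `Ω`
in the distributional sense. -/
theorem viscosity_implies_distributional_laplacian {n : ℕ}
    (Ω : Set (Fin n → ℝ)) (hΩ : IsOpen Ω)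
    (f : (Fin n → ℝ) → ℝ) (hf : ContinuousOn f Ω)
    (α : (Fin n → ℝ) → ℝ) (hα : ContDiffOn ℝ (⊤ : ℕ∞) α Ω)
    (hvisc : ∀ p ∈ Ω, ∀ (U : Set (Fin n → ℝ)) (h : (Fin n → ℝ) → ℝ),
      IsOpen U → p ∈ U → U ⊆ Ω → ContDiffOn ℝ 2 h U → h p = f p →
      (∀ x ∈ U, h x ≤ f x) → lapl h p ≤ α p) :
    ∀ φ : (Fin n → ℝ) → ℝ, ContDiff ℝ (⊤ : ℕ∞) φ → HasCompactSupport φ → tsupport φ ⊆ Ω →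
      (∀ x, 0 ≤ φ x) →
      ∫ x in Ω, f x * lapl φ x ≤ ∫ x in Ω, α x * φ x := by
  have hofLp : Continuous (WithLp.ofLp : EuclideanSpace ℝ (Fin n) → Fin n → ℝ) :=
    PiLp.continuous_ofLp 2 _
  have hdist := viscosity_implies_distributional_laplacian_general (hΩ.preimage hofLp)
    (hf.comp hofLp.continuousOn fun _ hx ↦ hx)
    (hα.continuousOn.comp hofLp.continuousOn fun _ hx ↦ hx) (viscosityLaplacianLEOn_comp_ofLp hvisc)
  exact fun φ ↦ hdist.setIntegral_mul_lapl_le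
end
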